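/- A finitely presented left P_k(Ē)-module M of finite length satisfies L_k(E) ⊗_{P_k(Ē)} M = 0 if and only if all composition factors of M are isomorphic to modules in the set {coker(ν_i) : i ∈ E^0 not a sink}. That is, the category M of finitely presented P_k(Ē)-modules killed by L_k(E) ⊗_{P_k(Ē)} − is exactly the full subcategory of finite-length finitely presented P_k(Ē)-modules all of whose composition factors lie in {coker(ν_i) : i ∈ E^0 \ Sink(E)}. -/

import Mathlib

namespace LPA

/-- A finite quiver: finite sets of vertices and arrows with source and target maps. -/
structure FinQuiver : Type 1 where
  V : Type
  A : Type
  [fintypeV : Fintype V]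
  [decEqV : DecidableEq V]
  [fintypeA : Fintype A]
  [decEqA : DecidableEq A]
  src : A → V
  tgt : A → V

attribute [instance] FinQuiver.fintypeV FinQuiver.decEqV FinQuiver.fintypeA FinQuiver.decEqA

/-- The inverse quiver: all arrows reversed. -/
def FinQuiver.rev (Q : FinQuiver) : FinQuiver where
  V := Q.V
  A := Q.A
  fintypeV := Q.fintypeV
  decEqV := Q.decEqV
  fintypeA := Q.fintypeA
  decEqA := Q.decEqA
  src := Q.tgt
  tgt := Q.src

/-- Generators of the path algebra: a trivial path `p v` for each vertex and an arrow `e` for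
each arrow. -/
inductive PathGen (Q : FinQuiver) : Type
  | vertex (v : Q.V) : PathGen Q
  | edge (e : Q.A) : PathGen Q

/-- Defining relations of the path algebra: the trivial paths are pairwise orthogonal
idempotents summing to `1`, and `p (src e) * e = e = e * p (tgt e)`. -/
inductive PathRel (k : Type) [CommRing k] (Q : FinQuiver) :
    FreeAlgebra k (PathGen Q) → FreeAlgebra k (PathGen Q) → Prop
  | vertex_mul_self (v : Q.V) :
      PathRel k Q (FreeAlgebra.ι k (PathGen.vertex v) * FreeAlgebra.ι k (PathGen.vertex v))
        (FreeAlgebra.ι k (PathGen.vertex v))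
  | vertex_mul_ne (v w : Q.V) (h : v ≠ w) :
      PathRel k Q (FreeAlgebra.ι k (PathGen.vertex v) * FreeAlgebra.ι k (PathGen.vertex w)) 0
  | sum_vertex :
      PathRel k Q (∑ v : Q.V, FreeAlgebra.ι k (PathGen.vertex v)) 1
  | src_mul (e : Q.A) :
      PathRel k Q
        (FreeAlgebra.ι k (PathGen.vertex (Q.src e)) * FreeAlgebra.ι k (PathGen.edge e))
        (FreeAlgebra.ι k (PathGen.edge e))
  | mul_tgt (e : Q.A) :
      PathRel k Q
        (FreeAlgebra.ι k (PathGen.edge e) * FreeAlgebra.ι k (PathGen.vertex (Q.tgt e)))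
        (FreeAlgebra.ι k (PathGen.edge e))

/-- The path algebra `P_k(Q)` of a finite quiver `Q`, presented by generators and relations. -/
def PathAlg (k : Type) [CommRing k] (Q : FinQuiver) : Type :=
  RingQuot (PathRel k Q)

variable (k : Type) [CommRing k] (Q : FinQuiver)

noncomputable instance : Ring (PathAlg k Q) :=
  inferInstanceAs (Ring (RingQuot (PathRel k Q)))

noncomputable instance : Algebra k (PathAlg k Q) :=
  inferInstanceAs (Algebra k (RingQuot (PathRel k Q)))

/-- The quotient map from the free algebra onto the path algebra. -/
noncomputable def PathAlg.mk : FreeAlgebra k (PathGen Q) →ₐ[k] PathAlg k Q :=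
  RingQuot.mkAlgHom k (PathRel k Q)

/-- The trivial path (vertex idempotent) `p v` in the path algebra. -/
noncomputable def PathAlg.p (v : Q.V) : PathAlg k Q :=
  PathAlg.mk k Q (FreeAlgebra.ι k (PathGen.vertex v))

/-- The arrow `e` in the path algebra. -/
noncomputable def PathAlg.arrow (e : Q.A) : PathAlg k Q :=
  PathAlg.mk k Q (FreeAlgebra.ι k (PathGen.edge e))

theorem PathAlg.mk_rel {x y : FreeAlgebra k (PathGen Q)} (h : PathRel k Q x y) :
    PathAlg.mk k Q x = PathAlg.mk k Q y :=
  RingQuot.mkAlgHom_rel k h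

theorem PathAlg.p_mul_self (v : Q.V) : PathAlg.p k Q v * PathAlg.p k Q v = PathAlg.p k Q v := by
  have h := PathAlg.mk_rel k Q (PathRel.vertex_mul_self v)
  simpa [map_mul, PathAlg.p] using h

theorem PathAlg.p_mul_ne (v w : Q.V) (hvw : v ≠ w) :
    PathAlg.p k Q v * PathAlg.p k Q w = 0 := by
  have h := PathAlg.mk_rel k Q (PathRel.vertex_mul_ne v w hvw)
  simpa [map_mul, PathAlg.p] using h

theorem PathAlg.sum_p : (∑ v : Q.V, PathAlg.p k Q v) = 1 := by
  have h := PathAlg.mk_rel k Q (PathRel.sum_vertex)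
  simpa [map_sum, PathAlg.p] using h

theorem PathAlg.arrow_mul_tgt (e : Q.A) :
    PathAlg.arrow k Q e * PathAlg.p k Q (Q.tgt e) = PathAlg.arrow k Q e := by
  have h := PathAlg.mk_rel k Q (PathRel.mul_tgt e)
  simpa [map_mul, PathAlg.p, PathAlg.arrow] using h

theorem PathAlg.src_mul_arrow (e : Q.A) :
    PathAlg.p k Q (Q.src e) * PathAlg.arrow k Q e = PathAlg.arrow k Q e := by
  have h := PathAlg.mk_rel k Q (PathRel.src_mul e)
  simpa [map_mul, PathAlg.p, PathAlg.arrow] using h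

/-- The set of vertices `{p v | v ∈ Q.V}` of the path algebra, as a finite set. -/
noncomputable def vertexFinset : Finset (PathAlg k Q) :=
  letI := Classical.decEq (PathAlg k Q)
  Finset.univ.image (PathAlg.p k Q)

end LPA

namespace LPA

/-- Generators of the Leavitt path algebra: vertex idempotents, arrows, and ghost arrows. -/
inductive LGen (Q : FinQuiver) : Type
  | vertex (v : Q.V) : LGen Q
  | edge (e : Q.A) : LGen Q
  | ghost (e : Q.A) : LGen Q

/-- Defining relations of the Leavitt path algebra `L_k(E)`: (V), (E1), (E2), (CK1), (CK2),
together with `∑ p_v = 1`. -/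
inductive LeavittRel (k : Type) [CommRing k] (Q : FinQuiver) :
    FreeAlgebra k (LGen Q) → FreeAlgebra k (LGen Q) → Prop
  | vertex_mul_self (v : Q.V) :
      LeavittRel k Q (FreeAlgebra.ι k (LGen.vertex v) * FreeAlgebra.ι k (LGen.vertex v))
        (FreeAlgebra.ι k (LGen.vertex v))
  | vertex_mul_ne (v w : Q.V) (h : v ≠ w) :
      LeavittRel k Q (FreeAlgebra.ι k (LGen.vertex v) * FreeAlgebra.ι k (LGen.vertex w)) 0
  | sum_vertex :
      LeavittRel k Q (∑ v : Q.V, FreeAlgebra.ι k (LGen.vertex v)) 1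
  | src_mul (e : Q.A) :
      LeavittRel k Q (FreeAlgebra.ι k (LGen.vertex (Q.src e)) * FreeAlgebra.ι k (LGen.edge e))
        (FreeAlgebra.ι k (LGen.edge e))
  | mul_tgt (e : Q.A) :
      LeavittRel k Q (FreeAlgebra.ι k (LGen.edge e) * FreeAlgebra.ι k (LGen.vertex (Q.tgt e)))
        (FreeAlgebra.ι k (LGen.edge e))
  | tgt_mul_ghost (e : Q.A) :
      LeavittRel k Q (FreeAlgebra.ι k (LGen.vertex (Q.tgt e)) * FreeAlgebra.ι k (LGen.ghost e))
        (FreeAlgebra.ι k (LGen.ghost e))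
  | ghost_mul_src (e : Q.A) :
      LeavittRel k Q (FreeAlgebra.ι k (LGen.ghost e) * FreeAlgebra.ι k (LGen.vertex (Q.src e)))
        (FreeAlgebra.ι k (LGen.ghost e))
  | ghost_mul_edge_self (e : Q.A) :
      LeavittRel k Q (FreeAlgebra.ι k (LGen.ghost e) * FreeAlgebra.ι k (LGen.edge e))
        (FreeAlgebra.ι k (LGen.vertex (Q.tgt e)))
  | ghost_mul_edge_ne (e f : Q.A) (h : e ≠ f) :
      LeavittRel k Q (FreeAlgebra.ι k (LGen.ghost e) * FreeAlgebra.ι k (LGen.edge f)) 0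
  | cuntz_krieger (v : Q.V) (h : ∃ e : Q.A, Q.src e = v) :
      LeavittRel k Q
        (∑ e ∈ Finset.univ.filter (fun e : Q.A => Q.src e = v),
          FreeAlgebra.ι k (LGen.edge e) * FreeAlgebra.ι k (LGen.ghost e))
        (FreeAlgebra.ι k (LGen.vertex v))

/-- The Leavitt path algebra `L_k(E)`. -/
def Leavitt (k : Type) [CommRing k] (Q : FinQuiver) : Type :=
  RingQuot (LeavittRel k Q)

variable (k : Type) [CommRing k] (Q : FinQuiver)

noncomputable instance : Ring (Leavitt k Q) :=
  inferInstanceAs (Ring (RingQuot (LeavittRel k Q)))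

noncomputable instance : Algebra k (Leavitt k Q) :=
  inferInstanceAs (Algebra k (RingQuot (LeavittRel k Q)))

/-- The quotient map from the free algebra onto the Leavitt path algebra. -/
noncomputable def Leavitt.mk : FreeAlgebra k (LGen Q) →ₐ[k] Leavitt k Q :=
  RingQuot.mkAlgHom k (LeavittRel k Q)

/-- The vertex idempotent `p v` in the Leavitt path algebra. -/
noncomputable def Leavitt.p (v : Q.V) : Leavitt k Q :=
  Leavitt.mk k Q (FreeAlgebra.ι k (LGen.vertex v))

/-- The arrow `e` in the Leavitt path algebra. -/
noncomputable def Leavitt.ed (e : Q.A) : Leavitt k Q :=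
  Leavitt.mk k Q (FreeAlgebra.ι k (LGen.edge e))

/-- The ghost arrow `ē` in the Leavitt path algebra. -/
noncomputable def Leavitt.gh (e : Q.A) : Leavitt k Q :=
  Leavitt.mk k Q (FreeAlgebra.ι k (LGen.ghost e))

theorem Leavitt.mk_rel {x y : FreeAlgebra k (LGen Q)} (h : LeavittRel k Q x y) :
    Leavitt.mk k Q x = Leavitt.mk k Q y :=
  RingQuot.mkAlgHom_rel k h

theorem Leavitt.p_mul_self (v : Q.V) : Leavitt.p k Q v * Leavitt.p k Q v = Leavitt.p k Q v := by
  have h := Leavitt.mk_rel k Q (LeavittRel.vertex_mul_self v)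
  simpa [map_mul, Leavitt.p] using h

theorem Leavitt.p_mul_ne (v w : Q.V) (hvw : v ≠ w) :
    Leavitt.p k Q v * Leavitt.p k Q w = 0 := by
  have h := Leavitt.mk_rel k Q (LeavittRel.vertex_mul_ne v w hvw)
  simpa [map_mul, Leavitt.p] using h

theorem Leavitt.sum_p : (∑ v : Q.V, Leavitt.p k Q v) = 1 := by
  have h := Leavitt.mk_rel k Q (LeavittRel.sum_vertex)
  simpa [map_sum, Leavitt.p] using h

theorem Leavitt.tgt_mul_gh (e : Q.A) :
    Leavitt.p k Q (Q.tgt e) * Leavitt.gh k Q e = Leavitt.gh k Q e := by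
  have h := Leavitt.mk_rel k Q (LeavittRel.tgt_mul_ghost e)
  simpa [map_mul, Leavitt.p, Leavitt.gh] using h

theorem Leavitt.gh_mul_src (e : Q.A) :
    Leavitt.gh k Q e * Leavitt.p k Q (Q.src e) = Leavitt.gh k Q e := by
  have h := Leavitt.mk_rel k Q (LeavittRel.ghost_mul_src e)
  simpa [map_mul, Leavitt.p, Leavitt.gh] using h

/-- The canonical embedding `P_k(Ē) → L_k(E)` of the path algebra of the inverse quiver into
the Leavitt path algebra, sending `p v ↦ p v` and each reversed arrow `ē ↦ ē`. -/
noncomputable def revToLeavitt : PathAlg k Q.rev →ₐ[k] Leavitt k Q :=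
  RingQuot.liftAlgHom k ⟨((FreeAlgebra.lift k fun g =>
    match g with
    | PathGen.vertex v => Leavitt.p k Q v
    | PathGen.edge e => Leavitt.gh k Q e : FreeAlgebra k (PathGen Q.rev) →ₐ[k] Leavitt k Q)), by
      intro x y h
      induction h with
      | vertex_mul_self v =>
          simp only [map_mul, FreeAlgebra.lift_ι_apply]
          exact Leavitt.p_mul_self k Q v
      | vertex_mul_ne v w h =>
          simp only [map_mul, map_zero, FreeAlgebra.lift_ι_apply]
          exact Leavitt.p_mul_ne k Q v w h
      | sum_vertex =>
          simp only [map_sum, map_one, FreeAlgebra.lift_ι_apply]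
          exact Leavitt.sum_p k Q
      | src_mul e =>
          simp only [map_mul, FreeAlgebra.lift_ι_apply]
          exact Leavitt.tgt_mul_gh k Q e
      | mul_tgt e =>
          simp only [map_mul, FreeAlgebra.lift_ι_apply]
          exact Leavitt.gh_mul_src k Q e⟩

/-- The canonical embedding `P_k(E) → L_k(E)` of the path algebra into the Leavitt path
algebra, sending `p v ↦ p v` and each arrow `e ↦ e`. -/
noncomputable def pathToLeavitt : PathAlg k Q →ₐ[k] Leavitt k Q :=
  RingQuot.liftAlgHom k ⟨((FreeAlgebra.lift k fun g =>
    match g with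
    | PathGen.vertex v => Leavitt.p k Q v
    | PathGen.edge e => Leavitt.ed k Q e : FreeAlgebra k (PathGen Q) →ₐ[k] Leavitt k Q)), by
      intro x y h
      induction h with
      | vertex_mul_self v =>
          simp only [map_mul, FreeAlgebra.lift_ι_apply]
          exact Leavitt.p_mul_self k Q v
      | vertex_mul_ne v w h =>
          simp only [map_mul, map_zero, FreeAlgebra.lift_ι_apply]
          exact Leavitt.p_mul_ne k Q v w h
      | sum_vertex =>
          simp only [map_sum, map_one, FreeAlgebra.lift_ι_apply]
          exact Leavitt.sum_p k Q
      | src_mul e =>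
          simp only [map_mul, FreeAlgebra.lift_ι_apply]
          have h := Leavitt.mk_rel k Q (LeavittRel.src_mul e)
          simpa [map_mul, Leavitt.p, Leavitt.ed] using h
      | mul_tgt e =>
          simp only [map_mul, FreeAlgebra.lift_ι_apply]
          have h := Leavitt.mk_rel k Q (LeavittRel.mul_tgt e)
          simpa [map_mul, Leavitt.p, Leavitt.ed] using h⟩

end LPA

namespace LPA

open TensorProduct

variable (P L : Type) [Ring P] [Ring L] (φ : P →+* L)

/-- The subgroup of relations defining the balanced tensor product `L ⊗_P M` (where `L` is a
right `P`-module via `φ` and `M` a left `P`-module) as a quotient of `L ⊗_ℤ M`. -/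
noncomputable def trel (M : Type) [AddCommGroup M] [Module P M] :
    Submodule L (TensorProduct ℤ L M) :=
  Submodule.span L
    {z | ∃ (l : L) (p : P) (m : M), z = (l * φ p) ⊗ₜ[ℤ] m - l ⊗ₜ[ℤ] (p • m)}

/-- The balanced tensor product `L ⊗_P M`, a left `L`-module. -/
abbrev TensorPhi (M : Type) [AddCommGroup M] [Module P M] : Type :=
  TensorProduct ℤ L M ⧸ trel P L φ M

/-- Functoriality of `L ⊗_P -` : the map induced on balanced tensor products by a `P`-linear
map `f : M → N`. -/
noncomputable def tmap {M N : Type} [AddCommGroup M] [Module P M] [AddCommGroup N]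
    [Module P N] (f : M →ₗ[P] N) : TensorPhi P L φ M →ₗ[L] TensorPhi P L φ N :=
  Submodule.mapQ _ _
    (TensorProduct.AlgebraTensorModule.map (LinearMap.id : L →ₗ[L] L)
      f.toAddMonoidHom.toIntLinearMap)
    (by
      refine Submodule.span_le.mpr ?_
      rintro z ⟨l, p, m, rfl⟩
      simp only [SetLike.mem_coe, Submodule.mem_comap, map_sub,
        TensorProduct.AlgebraTensorModule.map_tmul, LinearMap.id_coe, id_eq,
        AddMonoidHom.coe_toIntLinearMap, LinearMap.toAddMonoidHom_coe]
      exact Submodule.subset_span ⟨l, p, f m, by rw [f.map_smul]⟩)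

/-- `L` is flat as a right `P`-module (via `φ : P → L`): the functor `L ⊗_P -` preserves
injectivity. -/
def RightFlat : Prop :=
  ∀ (M N : Type) [AddCommGroup M] [Module P M] [AddCommGroup N] [Module P N],
    ∀ f : M →ₗ[P] N, Function.Injective f → Function.Injective (tmap P L φ f)

end LPA

namespace LPA

/-- Right multiplication by a fixed element, as an endomorphism of the left regular module. -/
noncomputable def rightMul (R : Type) [Ring R] (x : R) : R →ₗ[R] R where
  toFun y := y * x
  map_add' a b := add_mul a b x
  map_smul' r y := by simp [smul_eq_mul, mul_assoc]

variable (k : Type) [CommRing k] (Q : FinQuiver)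

/-- The principal left ideal `P_k(Ē)·p_v` of the path algebra of the inverse quiver. -/
noncomputable def pIdeal (v : Q.V) : Submodule (PathAlg k Q.rev) (PathAlg k Q.rev) :=
  LinearMap.range (rightMul (PathAlg k Q.rev) (PathAlg.p k Q.rev v))

/-- The principal left ideal `L_k(E)·p_v` of the Leavitt path algebra. -/
noncomputable def pIdealL (v : Q.V) : Submodule (Leavitt k Q) (Leavitt k Q) :=
  LinearMap.range (rightMul (Leavitt k Q) (Leavitt.p k Q v))

/-- A sink: a vertex emitting no arrows. -/
def IsSink (v : Q.V) : Prop := ∀ e : Q.A, Q.src e ≠ v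

/-- For a non-sink vertex `i` (and, degenerately, for a sink, where the domain is trivial),
the left `P_k(Ē)`-module homomorphism
`ν_i : ⊕_{e ∈ s⁻¹(i)} P_k(Ē)·p_{r(e)} → P_k(Ē)·p_i`, `(r_e) ↦ ∑ r_e·ē`. -/
noncomputable def nu (i : Q.V) :
    ((e : {e : Q.A // Q.src e = i}) → ↥(pIdeal k Q (Q.tgt e.1)))
      →ₗ[PathAlg k Q.rev] ↥(pIdeal k Q i) :=
  LinearMap.codRestrict (pIdeal k Q i)
    { toFun := fun x =>
        ∑ e : {e : Q.A // Q.src e = i}, ((x e : PathAlg k Q.rev) * PathAlg.arrow k Q.rev e.1)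
      map_add' := by
        intro a b
        simp [add_mul, Finset.sum_add_distrib]
      map_smul' := by
        intro r x
        simp [smul_eq_mul, Finset.mul_sum, mul_assoc] }
    (by
      intro x
      refine ⟨∑ e : {e : Q.A // Q.src e = i},
        ((x e : PathAlg k Q.rev) * PathAlg.arrow k Q.rev e.1), ?_⟩
      simp only [rightMul, LinearMap.coe_mk, AddHom.coe_mk, Finset.sum_mul]
      refine Finset.sum_congr rfl fun e _ => ?_
      obtain ⟨e, he⟩ := e
      subst he
      rw [mul_assoc]
      congr 1
      exact PathAlg.arrow_mul_tgt k Q.rev e)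

/-- The cokernel of `ν_i`, a finite-dimensional simple `P_k(Ē)`-module. -/
abbrev CokerNu (i : Q.V) : Type :=
  ↥(pIdeal k Q i) ⧸ LinearMap.range (nu k Q i)

/-- Reachability by a (possibly trivial) path in the quiver `E`. -/
inductive Reaches : Q.V → Q.V → Prop
  | refl (v : Q.V) : Reaches v v
  | step (e : Q.A) {w : Q.V} : Reaches (Q.tgt e) w → Reaches (Q.src e) w

end LPA

namespace LPA

/-- A composition series `0 = c 0 < c 1 < … < c ℓ = M` with simple factors. -/
def IsCompSeries {R M : Type} [Ring R] [AddCommGroup M] [Module R M] (ℓ : ℕ)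
    (c : Fin (ℓ + 1) → Submodule R M) : Prop :=
  c 0 = ⊥ ∧ c (Fin.last ℓ) = ⊤ ∧
    ∀ i : Fin ℓ, c i.castSucc < c i.succ ∧
      IsSimpleModule R
        (↥(c i.succ) ⧸ Submodule.comap (c i.succ).subtype (c i.castSucc))

/-- The `i`-th factor `c (i+1) / c i` of a series of submodules. -/
abbrev SeriesFactor {R M : Type} [Ring R] [AddCommGroup M] [Module R M] {ℓ : ℕ}
    (c : Fin (ℓ + 1) → Submodule R M) (i : Fin ℓ) : Type :=
  ↥(c i.succ) ⧸ Submodule.comap (c i.succ).subtype (c i.castSucc)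

end LPA

namespace LPA

section Aux

variable (k : Type) [Field k] (Q : FinQuiver)

/-- Vertex idempotent of `P_k(Ē)`. -/
noncomputable def pv (v : Q.V) : PathAlg k Q.rev := PathAlg.p k Q.rev v

/-- Ghost arrow of `P_k(Ē)`. -/
noncomputable def ga (e : Q.A) : PathAlg k Q.rev := PathAlg.arrow k Q.rev e

theorem pv_self (v : Q.V) : pv k Q v * pv k Q v = pv k Q v := PathAlg.p_mul_self k Q.rev v
theorem pv_ne (v w : Q.V) (h : v ≠ w) : pv k Q v * pv k Q w = 0 :=
  PathAlg.p_mul_ne k Q.rev v w h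
theorem sum_pv : (∑ v : Q.V, pv k Q v) = 1 := PathAlg.sum_p k Q.rev
theorem ga_mul_pv (e : Q.A) : ga k Q e * pv k Q (Q.src e) = ga k Q e :=
  PathAlg.arrow_mul_tgt k Q.rev e
theorem pv_mul_ga (e : Q.A) : pv k Q (Q.tgt e) * ga k Q e = ga k Q e :=
  PathAlg.src_mul_arrow k Q.rev e

theorem ga_mul_pv_ne (e : Q.A) (v : Q.V) (h : Q.src e ≠ v) : ga k Q e * pv k Q v = 0 := by
  rw [← ga_mul_pv, mul_assoc, pv_ne k Q _ _ h, mul_zero]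

theorem pv_mul_ga_ne (e : Q.A) (v : Q.V) (h : v ≠ Q.tgt e) : pv k Q v * ga k Q e = 0 := by
  rw [← pv_mul_ga, ← mul_assoc, pv_ne k Q _ _ h, zero_mul]

theorem pathAlg_induction {C : PathAlg k Q.rev → Prop}
    (hs : ∀ c : k, C (algebraMap k _ c)) (hp : ∀ v, C (pv k Q v)) (hg : ∀ e, C (ga k Q e))
    (hm : ∀ a b, C a → C b → C (a * b)) (ha : ∀ a b, C a → C b → C (a + b)) (r) : C r := by
  obtain ⟨x, rfl⟩ : ∃ x, PathAlg.mk k Q.rev x = r := RingQuot.mkAlgHom_surjective k _ r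
  induction x using FreeAlgebra.induction with
  | grade0 c => rw [AlgHom.commutes]; exact hs c
  | grade1 x =>
    cases x with
    | vertex v => exact hp v
    | edge e => exact hg e
  | mul a b h1 h2 => rw [map_mul]; exact hm _ _ h1 h2
  | add a b h1 h2 => rw [map_add]; exact ha _ _ h1 h2

/-- `n` is a socle-type vector at `v`. -/
def Soc {M : Type} [AddCommGroup M] [Module (PathAlg k Q.rev) M] (v : Q.V) (n : M) : Prop :=
  pv k Q v • n = n ∧ ∀ e, Q.src e = v → ga k Q e • n = 0

variable {M : Type} [AddCommGroup M] [Module (PathAlg k Q.rev) M]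

variable {k Q} in
theorem Soc.ga_smul {v : Q.V} {n : M} (h : Soc k Q v n) (e : Q.A) : ga k Q e • n = 0 := by
  by_cases he : Q.src e = v
  · exact h.2 e he
  · rw [← h.1, smul_smul, ga_mul_pv_ne k Q e v he, zero_smul]

variable {k Q} in
theorem Soc.smul {v : Q.V} {n : M} (h : Soc k Q v n) (r : PathAlg k Q.rev) :
    ∃ c : k, r • n = algebraMap k (PathAlg k Q.rev) c • n := by
  induction r using pathAlg_induction with
  | hs c => exact ⟨c, rfl⟩
  | hp w =>
    by_cases hw : w = v
    · subst hw; exact ⟨1, by rw [h.1, map_one, one_smul]⟩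
    · exact ⟨0, by rw [← h.1, smul_smul, pv_ne k Q _ _ hw]; simp⟩
  | hg e => exact ⟨0, by rw [h.ga_smul]; simp⟩
  | hm a b ha hb =>
    obtain ⟨c, hc⟩ := ha
    obtain ⟨d, hd⟩ := hb
    refine ⟨d * c, ?_⟩
    rw [mul_smul, hd, smul_smul, ← Algebra.commutes, mul_smul, hc, map_mul, mul_smul]
  | ha a b ha hb =>
    obtain ⟨c, hc⟩ := ha
    obtain ⟨d, hd⟩ := hb
    exact ⟨c + d, by rw [add_smul, hc, hd, map_add, add_smul]⟩

variable {k Q} in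
theorem Soc.smul_soc {v : Q.V} {n : M} (h : Soc k Q v n) (r : PathAlg k Q.rev) :
    Soc k Q v (r • n) := by
  obtain ⟨c, hc⟩ := h.smul r
  rw [hc]
  constructor
  · rw [smul_smul, ← Algebra.commutes, mul_smul, h.1]
  · intro e he
    rw [smul_smul, ← Algebra.commutes, mul_smul, h.2 e he, smul_zero]

theorem mem_pIdeal (v : Q.V) (x : PathAlg k Q.rev) : x ∈ pIdeal k Q v ↔ x * pv k Q v = x := by
  constructor
  · rintro ⟨y, rfl⟩
    change y * pv k Q v * pv k Q v = y * pv k Q v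
    rw [mul_assoc, pv_self]
  · intro h
    exact ⟨x, h⟩

/-- The generator of `P p_v`. -/
noncomputable def gen (v : Q.V) : pIdeal k Q v := ⟨pv k Q v, (mem_pIdeal k Q v _).2 (pv_self k Q v)⟩

theorem eq_smul_gen (v : Q.V) (x : pIdeal k Q v) : x = (x : PathAlg k Q.rev) • gen k Q v := by
  apply Subtype.ext
  exact ((mem_pIdeal k Q v _).1 x.2).symm

theorem nu_apply (v : Q.V) (x) : ((nu k Q v x : pIdeal k Q v) : PathAlg k Q.rev) =
    ∑ e : {e : Q.A // Q.src e = v}, ((x e : PathAlg k Q.rev) * ga k Q e.1) := rfl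

/-- Generator of the cokernel. -/
noncomputable def cgen (v : Q.V) : CokerNu k Q v := (LinearMap.range (nu k Q v)).mkQ (gen k Q v)

theorem soc_cgen (v : Q.V) : Soc k Q v (cgen k Q v) := by
  constructor
  · rw [cgen, ← map_smul]
    congr 1
    exact Subtype.ext (pv_self k Q v)
  · intro e he
    rw [cgen, ← map_smul, Submodule.mkQ_apply, Submodule.Quotient.mk_eq_zero]
    refine ⟨Pi.single ⟨e, he⟩ (gen k Q (Q.tgt e)), ?_⟩
    apply Subtype.ext
    rw [nu_apply, Finset.sum_eq_single (⟨e, he⟩ : {e : Q.A // Q.src e = v})]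
    · rw [Pi.single_eq_same]
      subst he
      change pv k Q (Q.tgt e) * ga k Q e = ga k Q e * pv k Q (Q.src e)
      rw [pv_mul_ga, ga_mul_pv]
    · intro b _ hb
      rw [Pi.single_eq_of_ne hb]
      simp
    · simp

theorem soc_coker (v : Q.V) (x : CokerNu k Q v) : Soc k Q v x := by
  obtain ⟨y, rfl⟩ := Submodule.mkQ_surjective _ x
  rw [eq_smul_gen k Q v y, map_smul]
  exact (soc_cgen k Q v).smul_soc _

variable {k Q} in
theorem Soc.equiv {v : Q.V} {n : M} (h : Soc k Q v n) (hn : n ≠ 0) :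
    Nonempty ((Submodule.span (PathAlg k Q.rev) {n}) ≃ₗ[PathAlg k Q.rev] CokerNu k Q v) := by
  let f : pIdeal k Q v →ₗ[PathAlg k Q.rev] M :=
    (LinearMap.toSpanSingleton (PathAlg k Q.rev) M n).comp (pIdeal k Q v).subtype
  have hf : ∀ x, f x = (x : PathAlg k Q.rev) • n := fun x => rfl
  have hker : LinearMap.ker f = LinearMap.range (nu k Q v) := by
    apply le_antisymm
    · intro x hx
      have hx' : (x : PathAlg k Q.rev) • n = 0 := hx
      obtain ⟨c, hc⟩ := (soc_cgen k Q v).smul (x : PathAlg k Q.rev)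
      rw [cgen, ← map_smul, ← map_smul, ← eq_smul_gen, ← sub_eq_zero, ← map_sub,
        Submodule.mkQ_apply, Submodule.Quotient.mk_eq_zero] at hc
      have key : ∀ y ∈ LinearMap.range (nu k Q v), f y = 0 := by
        rintro _ ⟨y, rfl⟩
        rw [hf, nu_apply, Finset.sum_smul]
        refine Finset.sum_eq_zero fun e _ => ?_
        rw [mul_smul, h.ga_smul, smul_zero]
      have h2 := key _ hc
      rw [map_sub, map_smul, hf, hf, hx', zero_sub, neg_eq_zero] at h2
      change _ • pv k Q v • n = 0 at h2
      rw [h.1] at h2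
      have hc0 : c = 0 := by
        by_contra hc0
        apply hn
        rw [← one_smul (PathAlg k Q.rev) n, ← map_one (algebraMap k (PathAlg k Q.rev)),
          ← inv_mul_cancel₀ hc0, map_mul, mul_smul, h2, smul_zero]
      subst hc0
      simpa using hc
    · rintro _ ⟨y, rfl⟩
      change f _ = 0
      rw [hf, nu_apply, Finset.sum_smul]
      refine Finset.sum_eq_zero fun e _ => ?_
      rw [mul_smul, h.ga_smul, smul_zero]
  have hrange : LinearMap.range f = Submodule.span (PathAlg k Q.rev) {n} := by
    apply le_antisymm
    · rintro _ ⟨y, rfl⟩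
      rw [hf]
      exact Submodule.smul_mem _ _ (Submodule.mem_span_singleton_self n)
    · rw [Submodule.span_singleton_le_iff_mem]
      exact ⟨gen k Q v, h.1⟩
  exact ⟨(LinearEquiv.ofEq _ _ hrange).symm.trans
    (f.quotKerEquivRange.symm.trans (Submodule.quotEquivOfEq _ _ hker))⟩

variable {k Q} in
theorem Soc.simple {v : Q.V} {n : M} (h : Soc k Q v n) (hn : n ≠ 0) :
    IsSimpleModule (PathAlg k Q.rev) (Submodule.span (PathAlg k Q.rev) {n}) := by
  rw [isSimpleModule_iff_isAtom]
  refine ⟨by simpa using hn, fun b hb => ?_⟩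
  by_contra hb0
  obtain ⟨x, hxb, hx0⟩ := b.ne_bot_iff.mp hb0
  obtain ⟨r, rfl⟩ := Submodule.mem_span_singleton.1 (hb.le hxb)
  obtain ⟨c, hc⟩ := h.smul r
  rw [hc] at hxb hx0
  have hc0 : c ≠ 0 := by
    rintro rfl
    simp at hx0
  have hnb : n ∈ b := by
    have := b.smul_mem (algebraMap k (PathAlg k Q.rev) c⁻¹) hxb
    rwa [smul_smul, ← map_mul, inv_mul_cancel₀ hc0, map_one, one_smul] at this
  exact absurd hb (not_lt_of_ge ((Submodule.span_singleton_le_iff_mem _ _).2 hnb))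

end Aux
end LPA

namespace LPA
section Rep
set_option linter.unusedSectionVars false

variable (k : Type) [Field k] (Q : FinQuiver)
variable (N : Type) [AddCommGroup N] [Module k N]

/-- Relevant paths: length at least `n`, or ending in a sink. -/
def relv : ℕ → List Q.A → Q.V → Prop
  | n, [], u => n = 0 ∨ IsSink Q u
  | n, e :: w, u => Q.src e = u ∧ relv (n - 1) w (Q.tgt e)

theorem relv_mono (w : List Q.A) : ∀ (n m : ℕ) (u : Q.V), n ≤ m → relv Q m w u → relv Q n w u := by
  induction w with
  | nil =>
    rintro n m u h (h1 | h1)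
    · exact Or.inl (by omega)
    · exact Or.inr h1
  | cons e w ih =>
    rintro n m u h ⟨h1, h2⟩
    exact ⟨h1, ih _ _ _ (by omega) h2⟩

/-- Functions eventually zero on relevant paths. -/
def evz : Submodule k (Q.V → List Q.A → N) where
  carrier := {f | ∃ n, ∀ w u, relv Q n w u → f u w = 0}
  zero_mem' := ⟨0, fun _ _ _ => rfl⟩
  add_mem' := by
    rintro f g ⟨n, hn⟩ ⟨m, hm⟩
    refine ⟨max n m, fun w u h => ?_⟩
    simp [hn w u (relv_mono Q w _ _ u (le_max_left _ _) h),
      hm w u (relv_mono Q w _ _ u (le_max_right _ _) h)]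
  smul_mem' := by
    rintro c f ⟨n, hn⟩
    exact ⟨n, fun w u h => by simp [hn w u h]⟩

/-- Germs of functions on long paths. -/
abbrev XX := (Q.V → List Q.A → N) ⧸ evz k Q N

variable {N} in
theorem XX_eq {f g : Q.V → List Q.A → N} (n : ℕ) (h : ∀ w u, relv Q n w u → f u w = g u w) :
    (evz k Q N).mkQ f = (evz k Q N).mkQ g := by
  rw [← sub_eq_zero, ← map_sub, Submodule.mkQ_apply, Submodule.Quotient.mk_eq_zero]
  exact ⟨n, fun w u hw => by simp [h w u hw]⟩

def TpF (v : Q.V) : (Q.V → List Q.A → N) →ₗ[k] (Q.V → List Q.A → N) where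
  toFun f u w := if u = v then f u w else 0
  map_add' f g := by
    funext u w
    by_cases h : u = v <;> simp [h]
  map_smul' c f := by
    funext u w
    by_cases h : u = v <;> simp [h]

def TgF (e : Q.A) : (Q.V → List Q.A → N) →ₗ[k] (Q.V → List Q.A → N) where
  toFun f u w := if u = Q.tgt e then f (Q.src e) (e :: w) else 0
  map_add' f g := by
    funext u w
    by_cases h : u = Q.tgt e <;> simp [h]
  map_smul' c f := by
    funext u w
    by_cases h : u = Q.tgt e <;> simp [h]

def teFun (e : Q.A) (f : Q.V → List Q.A → N) (u : Q.V) : List Q.A → N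
  | [] => 0
  | a :: w => if a = e ∧ u = Q.src e then f (Q.tgt e) w else 0

def TeF (e : Q.A) : (Q.V → List Q.A → N) →ₗ[k] (Q.V → List Q.A → N) where
  toFun f u w := teFun Q N e f u w
  map_add' f g := by
    funext u w
    cases w with
    | nil => simp [teFun]
    | cons a w => by_cases h : a = e ∧ u = Q.src e <;> simp [h, teFun]
  map_smul' c f := by
    funext u w
    cases w with
    | nil => simp [teFun]
    | cons a w => by_cases h : a = e ∧ u = Q.src e <;> simp [h, teFun]

noncomputable def Tp (v : Q.V) : Module.End k (XX k Q N) :=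
  Submodule.mapQ _ _ (TpF k Q N v) (by
    rintro f ⟨n, hn⟩
    refine ⟨n, fun w u h => ?_⟩
    change (if u = v then f u w else 0) = 0
    rw [hn w u h, ite_self])

noncomputable def Tg (e : Q.A) : Module.End k (XX k Q N) :=
  Submodule.mapQ _ _ (TgF k Q N e) (by
    rintro f ⟨n, hn⟩
    refine ⟨n, fun w u h => ?_⟩
    change (if u = Q.tgt e then f (Q.src e) (e :: w) else 0) = 0
    split_ifs with hu
    · subst hu
      exact hn _ _ ⟨rfl, relv_mono Q w _ _ _ (by omega) h⟩
    · rfl)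

noncomputable def Te (e : Q.A) : Module.End k (XX k Q N) :=
  Submodule.mapQ _ _ (TeF k Q N e) (by
    rintro f ⟨n, hn⟩
    refine ⟨n + 1, fun w u h => ?_⟩
    change teFun Q N e f u w = 0
    cases w with
    | nil => rfl
    | cons a w =>
      change (if a = e ∧ u = Q.src e then f (Q.tgt e) w else 0) = 0
      split_ifs with hu
      · obtain ⟨rfl, rfl⟩ := hu
        exact hn _ _ h.2
      · rfl)

variable {N}

theorem Tp_mk (v : Q.V) (f : Q.V → List Q.A → N) : Tp k Q N v ((evz k Q N).mkQ f) =
    (evz k Q N).mkQ (fun u w => if u = v then f u w else 0) := rfl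
theorem Tg_mk (e : Q.A) (f : Q.V → List Q.A → N) : Tg k Q N e ((evz k Q N).mkQ f) =
    (evz k Q N).mkQ (fun u w => if u = Q.tgt e then f (Q.src e) (e :: w) else 0) := rfl
theorem Te_mk (e : Q.A) (f : Q.V → List Q.A → N) : Te k Q N e ((evz k Q N).mkQ f) =
    (evz k Q N).mkQ (fun u w => teFun Q N e f u w) := rfl

theorem end_ext {S T : Module.End k (XX k Q N)}
    (h : ∀ f, S ((evz k Q N).mkQ f) = T ((evz k Q N).mkQ f)) : S = T := by
  apply LinearMap.ext
  intro x
  obtain ⟨f, rfl⟩ := Submodule.mkQ_surjective _ x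
  exact h f

variable (N)

/-- The representation of the Leavitt path algebra on germs. -/
noncomputable def rho : Leavitt k Q →ₐ[k] Module.End k (XX k Q N) :=
  RingQuot.liftAlgHom k ⟨((FreeAlgebra.lift k fun g =>
    match g with
    | LGen.vertex v => Tp k Q N v
    | LGen.edge e => Te k Q N e
    | LGen.ghost e => Tg k Q N e : FreeAlgebra k (LGen Q) →ₐ[k] Module.End k (XX k Q N))), by
      intro x y h
      induction h with
      | vertex_mul_self v =>
        simp only [map_mul, FreeAlgebra.lift_ι_apply]
        refine end_ext k Q fun f => ?_
        rw [Module.End.mul_apply, Tp_mk, Tp_mk]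
        refine XX_eq k Q 0 fun w u _ => ?_
        by_cases h : u = v <;> simp [h]
      | vertex_mul_ne v w h =>
        simp only [map_mul, map_zero, FreeAlgebra.lift_ι_apply]
        refine end_ext k Q fun f => ?_
        rw [Module.End.mul_apply, Tp_mk, Tp_mk, LinearMap.zero_apply, ← map_zero (evz k Q N).mkQ]
        refine XX_eq k Q 0 fun w u _ => ?_
        by_cases h : u = v <;> simp_all
      | sum_vertex =>
        simp only [map_sum, map_one, FreeAlgebra.lift_ι_apply]
        refine end_ext k Q fun f => ?_
        rw [LinearMap.sum_apply, Module.End.one_apply]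
        simp only [Tp_mk]
        rw [← map_sum]
        refine XX_eq k Q 0 fun w u _ => ?_
        simp [Finset.sum_apply]
      | src_mul e =>
        simp only [map_mul, FreeAlgebra.lift_ι_apply]
        refine end_ext k Q fun f => ?_
        rw [Module.End.mul_apply, Te_mk, Tp_mk]
        refine XX_eq k Q 0 fun w u _ => ?_
        cases w with
        | nil => simp [teFun]
        | cons a w => by_cases h : u = Q.src e <;> simp [teFun, h]
      | mul_tgt e =>
        simp only [map_mul, FreeAlgebra.lift_ι_apply]
        refine end_ext k Q fun f => ?_
        rw [Module.End.mul_apply, Tp_mk, Te_mk, Te_mk]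
        refine XX_eq k Q 0 fun w u _ => ?_
        cases w with
        | nil => simp [teFun]
        | cons a w => simp [teFun]
      | tgt_mul_ghost e =>
        simp only [map_mul, FreeAlgebra.lift_ι_apply]
        refine end_ext k Q fun f => ?_
        rw [Module.End.mul_apply, Tg_mk, Tp_mk]
        refine XX_eq k Q 0 fun w u _ => ?_
        by_cases h : u = Q.tgt e <;> simp [h]
      | ghost_mul_src e =>
        simp only [map_mul, FreeAlgebra.lift_ι_apply]
        refine end_ext k Q fun f => ?_
        rw [Module.End.mul_apply, Tp_mk, Tg_mk, Tg_mk]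
        refine XX_eq k Q 0 fun w u _ => ?_
        simp
      | ghost_mul_edge_self e =>
        simp only [map_mul, FreeAlgebra.lift_ι_apply]
        refine end_ext k Q fun f => ?_
        rw [Module.End.mul_apply, Te_mk, Tg_mk, Tp_mk]
        refine XX_eq k Q 0 fun w u _ => ?_
        by_cases h : u = Q.tgt e <;> simp [h, teFun]
      | ghost_mul_edge_ne e f h =>
        simp only [map_mul, map_zero, FreeAlgebra.lift_ι_apply]
        refine end_ext k Q fun g => ?_
        rw [Module.End.mul_apply, Te_mk, Tg_mk, LinearMap.zero_apply, ← map_zero (evz k Q N).mkQ]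
        refine XX_eq k Q 0 fun w u _ => ?_
        simp [h, teFun]
      | cuntz_krieger v h =>
        simp only [map_sum, map_mul, FreeAlgebra.lift_ι_apply]
        refine end_ext k Q fun f => ?_
        rw [LinearMap.sum_apply]
        simp only [Module.End.mul_apply, Tg_mk, Te_mk, Tp_mk]
        rw [← map_sum]
        refine XX_eq k Q 1 fun w u hw => ?_
        rw [Finset.sum_apply, Finset.sum_apply]
        cases w with
        | nil =>
          rcases hw with hw | hw
          · omega
          · have : u ≠ v := by
              rintro rfl
              obtain ⟨e, he⟩ := h
              exact hw e he
            simp [teFun, this]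
        | cons a w =>
          obtain ⟨rfl, -⟩ := hw
          simp only [teFun, if_true]
          by_cases hv : Q.src a = v
          · rw [if_pos hv, Finset.sum_eq_single a]
            · simp
            · intro b _ hb
              simp [hb.symm]
            · simp [hv]
          · rw [if_neg hv]
            refine Finset.sum_eq_zero fun b hb => ?_
            have hb' : Q.src b = v := by simpa using hb
            have : a ≠ b := by
              rintro rfl
              exact hv hb'
            simp [this]⟩

theorem rev_pv (v : Q.V) : revToLeavitt k Q (pv k Q v) = Leavitt.p k Q v := by
  refine (RingQuot.liftAlgHom_mkAlgHom_apply k _ _ _).trans ?_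
  rw [FreeAlgebra.lift_ι_apply]

theorem rev_ga (e : Q.A) : revToLeavitt k Q (ga k Q e) = Leavitt.gh k Q e := by
  refine (RingQuot.liftAlgHom_mkAlgHom_apply k _ _ _).trans ?_
  rw [FreeAlgebra.lift_ι_apply]

theorem rho_p (v : Q.V) : rho k Q N (revToLeavitt k Q (pv k Q v)) = Tp k Q N v := by
  rw [rev_pv]
  refine (RingQuot.liftAlgHom_mkAlgHom_apply k _ _ _).trans ?_
  rw [FreeAlgebra.lift_ι_apply]

theorem rho_g (e : Q.A) : rho k Q N (revToLeavitt k Q (ga k Q e)) = Tg k Q N e := by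
  rw [rev_ga]
  refine (RingQuot.liftAlgHom_mkAlgHom_apply k _ _ _).trans ?_
  rw [FreeAlgebra.lift_ι_apply]

variable [Module (PathAlg k Q.rev) N] [IsScalarTower k (PathAlg k Q.rev) N]
variable {N}

/-- The action of a ghost path. -/
noncomputable def act : List Q.A → Q.V → N → N
  | [], u, n => pv k Q u • n
  | e :: w, _, n => act w (Q.tgt e) (ga k Q e • n)

theorem act_add (w : List Q.A) : ∀ (u : Q.V) (a b : N),
    act k Q w u (a + b) = act k Q w u a + act k Q w u b := by
  induction w with
  | nil => intro u a b; simp [act]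
  | cons e w ih => intro u a b; simp [act, ih]

theorem smul_comm' (c : k) (r : PathAlg k Q.rev) (n : N) : r • c • n = c • r • n := by
  rw [← algebraMap_smul (PathAlg k Q.rev) c n, ← algebraMap_smul (PathAlg k Q.rev) c (r • n),
    smul_smul, smul_smul, Algebra.commutes]

theorem act_smul (w : List Q.A) : ∀ (u : Q.V) (c : k) (a : N),
    act k Q w u (c • a) = c • act k Q w u a := by
  induction w with
  | nil => intro u c a; simp only [act]; rw [smul_comm']
  | cons e w ih => intro u c a; simp only [act]; rw [smul_comm', ih]

theorem act_zero (w : List Q.A) (u : Q.V) : act k Q w u (0 : N) = 0 := by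
  have := act_smul k Q w u 0 (0 : N)
  simpa using this

theorem act_pv (w : List Q.A) (u v : Q.V) (n : ℕ) (h : relv Q n w u) (a : N) :
    act k Q w u (pv k Q v • a) = if u = v then act k Q w u a else 0 := by
  cases w with
  | nil =>
    simp only [act]
    split_ifs with huv
    · rw [huv, smul_smul, pv_self]
    · rw [smul_smul, pv_ne k Q _ _ huv, zero_smul]
  | cons e w =>
    obtain ⟨rfl, -⟩ := h
    simp only [act]
    split_ifs with huv
    · rw [← huv, smul_smul, ga_mul_pv]
    · rw [smul_smul, ga_mul_pv_ne k Q _ _ huv, zero_smul, act_zero]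

theorem act_ga (w : List Q.A) (u : Q.V) (e : Q.A) (n : ℕ) (h : relv Q n w u) (a : N) :
    act k Q w u (ga k Q e • a) = if u = Q.tgt e then act k Q (e :: w) (Q.src e) a else 0 := by
  rw [← pv_mul_ga, mul_smul, act_pv k Q w u _ n h]
  split_ifs with hu
  · subst hu
    rfl
  · rfl

variable (N) in
noncomputable def jF : N →ₗ[k] (Q.V → List Q.A → N) where
  toFun := fun n u w => act k Q w u n
  map_add' := fun a b => by funext u w; exact act_add k Q w u a b
  map_smul' := fun c a => by funext u w; exact act_smul k Q w u c a

variable (N) in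
noncomputable def jj : N →ₗ[k] XX k Q N := 
  (evz k Q N).mkQ.comp (jF k Q N)

theorem jj_apply (n : N) : jj k Q N n = (evz k Q N).mkQ (fun u w => act k Q w u n) := rfl

theorem jj_smul (r : PathAlg k Q.rev) : ∀ n : N,
    jj k Q N (r • n) = rho k Q N (revToLeavitt k Q r) (jj k Q N n) := by
  induction r using pathAlg_induction with
  | hs c =>
    intro n
    rw [algebraMap_smul, map_smul, AlgHom.commutes, AlgHom.commutes, Module.algebraMap_end_apply]
  | hp v =>
    intro n
    rw [rho_p, jj_apply, jj_apply, Tp_mk]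
    exact XX_eq k Q 0 fun w u h => act_pv k Q w u v 0 h n
  | hg e =>
    intro n
    rw [rho_g, jj_apply, jj_apply, Tg_mk]
    exact XX_eq k Q 0 fun w u h => act_ga k Q w u e 0 h n
  | hm a b ha hb =>
    intro n
    rw [mul_smul, ha, hb, map_mul, map_mul, Module.End.mul_apply]
  | ha a b ha hb =>
    intro n
    rw [add_smul, map_add, ha, hb, map_add, map_add, LinearMap.add_apply]

theorem eq_zero_of_pv (a : N) (h : ∀ v, pv k Q v • a = 0) : a = 0 := by
  rw [← one_smul (PathAlg k Q.rev) a, ← sum_pv, Finset.sum_smul]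
  exact Finset.sum_eq_zero fun v _ => h v

theorem inj_aux (htf : ∀ (v : Q.V) (a : N), ¬ IsSink Q v → Soc k Q v a → a = 0) (n : ℕ) :
    ∀ a : N, (∀ w u, relv Q n w u → act k Q w u a = 0) → a = 0 := by
  induction n with
  | zero => exact fun a h => eq_zero_of_pv k Q a fun v => h [] v (Or.inl rfl)
  | succ n ih =>
    intro a h
    refine eq_zero_of_pv k Q a fun v => ?_
    by_cases hv : IsSink Q v
    · exact h [] v (Or.inr hv)
    · refine htf v _ hv ⟨by rw [smul_smul, pv_self], fun e he => ?_⟩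
      subst he
      rw [smul_smul, ga_mul_pv]
      apply ih
      intro w u hw
      rw [act_ga k Q w u e n hw]
      split_ifs with hu
      · exact h _ _ ⟨rfl, by rw [← hu]; exact hw⟩
      · rfl

theorem jj_inj (htf : ∀ (v : Q.V) (a : N), ¬ IsSink Q v → Soc k Q v a → a = 0) (a : N)
    (h : jj k Q N a = 0) : a = 0 := by
  rw [jj_apply, Submodule.mkQ_apply, Submodule.Quotient.mk_eq_zero] at h
  obtain ⟨n, hn⟩ := h
  exact inj_aux k Q htf n a hn

open TensorProduct in
theorem jj_zero
    (hs : Subsingleton (TensorPhi (PathAlg k Q.rev) (Leavitt k Q) (revToLeavitt k Q).toRingHom N))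
    (a : N) : jj k Q N a = 0 := by
  letI : Module (Leavitt k Q) (XX k Q N) := Module.compHom _ (rho k Q N).toRingHom
  have hsm : ∀ (l : Leavitt k Q) (x : XX k Q N), l • x = rho k Q N l x := fun _ _ => rfl
  let B : Leavitt k Q →+ N →+ XX k Q N :=
    AddMonoidHom.mk' (fun l => AddMonoidHom.mk' (fun n => l • jj k Q N n)
      (fun x y => by rw [map_add, smul_add]))
      (fun x y => by ext n; exact add_smul x y _)
  let Psi : Leavitt k Q ⊗[ℤ] N →+ XX k Q N := TensorProduct.liftAddHom B (by
    intro r m n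
    rw [map_zsmul, map_zsmul, AddMonoidHom.smul_apply])
  have hPsi : ∀ l n, Psi (l ⊗ₜ n) = l • jj k Q N n := fun l n => rfl
  have hlin : ∀ (l : Leavitt k Q) (z : Leavitt k Q ⊗[ℤ] N), Psi (l • z) = l • Psi z := by
    intro l z
    induction z with
    | zero => simp
    | tmul x y => rw [TensorProduct.smul_tmul', hPsi, hPsi, smul_eq_mul, mul_smul]
    | add x y hx hy => rw [smul_add, map_add, map_add, hx, hy, smul_add]
  have hker : ∀ z ∈ trel (PathAlg k Q.rev) (Leavitt k Q) (revToLeavitt k Q).toRingHom N,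
      Psi z = 0 := by
    intro z hz
    induction hz using Submodule.span_induction with
    | mem z h =>
      obtain ⟨l, p, m, rfl⟩ := h
      rw [map_sub, hPsi, hPsi, jj_smul, mul_smul, sub_eq_zero]
      rfl
    | zero => simp
    | add x y _ _ hx hy => rw [map_add, hx, hy, add_zero]
    | smul l x _ hx => rw [hlin, hx, smul_zero]
  have h1 : ((1 : Leavitt k Q) ⊗ₜ[ℤ] a) ∈
      trel (PathAlg k Q.rev) (Leavitt k Q) (revToLeavitt k Q).toRingHom N := by
    rw [← Submodule.Quotient.mk_eq_zero]
    exact Subsingleton.elim _ _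
  have := hker _ h1
  rwa [hPsi, one_smul] at this

end Rep

theorem exists_soc (k : Type) [Field k] (Q : FinQuiver) (N : Type) [AddCommGroup N]
    [Module (PathAlg k Q.rev) N] [Nontrivial N]
    (hs : Subsingleton (TensorPhi (PathAlg k Q.rev) (Leavitt k Q) (revToLeavitt k Q).toRingHom N)) :
    ∃ (v : Q.V) (a : N), ¬ IsSink Q v ∧ Soc k Q v a ∧ a ≠ 0 := by
  letI : Module k N := Module.compHom N (algebraMap k (PathAlg k Q.rev))
  have : IsScalarTower k (PathAlg k Q.rev) N := ⟨fun c r n => by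
    rw [Algebra.smul_def, mul_smul]
    rfl⟩
  by_contra! H
  obtain ⟨a, ha⟩ := exists_ne (0 : N)
  exact ha (jj_inj k Q H a (jj_zero k Q hs a))

end LPA

namespace LPA
section Fin

open TensorProduct

variable (k : Type) [Field k] (Q : FinQuiver) {M : Type} [AddCommGroup M]
  [Module (PathAlg k Q.rev) M]

/-- One admissible step of a composition series. -/
def Stp (A B : Submodule (PathAlg k Q.rev) M) : Prop :=
  A < B ∧ IsSimpleModule (PathAlg k Q.rev) (↥B ⧸ Submodule.comap B.subtype A) ∧
    ∃ v : Q.V, ¬ IsSink Q v ∧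
      Nonempty ((↥B ⧸ Submodule.comap B.subtype A) ≃ₗ[PathAlg k Q.rev] CokerNu k Q v)

/-- Submodules with a good composition series. -/
def Good (N : Submodule (PathAlg k Q.rev) M) : Prop :=
  ∃ (l : ℕ) (c : Fin (l + 1) → Submodule (PathAlg k Q.rev) M),
    c 0 = ⊥ ∧ c (Fin.last l) = N ∧ ∀ i : Fin l, Stp k Q (c i.castSucc) (c i.succ)

theorem good_bot : Good k Q (⊥ : Submodule (PathAlg k Q.rev) M) :=
  ⟨0, fun _ => ⊥, rfl, rfl, fun i => i.elim0⟩

theorem Good.step {N N' : Submodule (PathAlg k Q.rev) M} (h : Good k Q N) (hs : Stp k Q N N') :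
    Good k Q N' := by
  obtain ⟨l, c, h0, h1, h2⟩ := h
  refine ⟨l + 1, Fin.snoc (α := fun _ => Submodule (PathAlg k Q.rev) M) c N', ?_, ?_, ?_⟩
  · have : (0 : Fin (l + 1 + 1)) = Fin.castSucc 0 := rfl
    rw [this, Fin.snoc_castSucc, h0]
  · rw [Fin.snoc_last]
  · intro i
    rw [Fin.snoc_castSucc]
    induction i using Fin.lastCases with
    | last => rw [Fin.succ_last, Fin.snoc_last, h1]; exact hs
    | cast i => rw [Fin.succ_castSucc, Fin.snoc_castSucc]; exact h2 i

theorem stp_of_soc (N : Submodule (PathAlg k Q.rev) M) {v : Q.V} (hv : ¬ IsSink Q v) {n : M ⧸ N}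
    (h : Soc k Q v n) (hn : n ≠ 0) :
    Stp k Q N (Submodule.comap N.mkQ (Submodule.span (PathAlg k Q.rev) {n})) := by
  set S := Submodule.span (PathAlg k Q.rev) {n} with hS
  set N' := Submodule.comap N.mkQ S with hN'
  let f : N' →ₗ[PathAlg k Q.rev] S := N.mkQ.restrict (p := N') (q := S) (fun x hx => hx)
  have hf : ∀ x : N', (f x : M ⧸ N) = N.mkQ x := fun x => rfl
  have hfs : Function.Surjective f := by
    rintro ⟨y, hy⟩
    obtain ⟨x, rfl⟩ := Submodule.mkQ_surjective N y
    exact ⟨⟨x, hy⟩, rfl⟩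
  have hker : LinearMap.ker f = Submodule.comap N'.subtype N := by
    ext x
    rw [LinearMap.mem_ker, Submodule.mem_comap, ← Submodule.coe_eq_zero, hf, Submodule.mkQ_apply,
      Submodule.Quotient.mk_eq_zero]
    rfl
  let E := (Submodule.quotEquivOfEq _ _ hker.symm).trans (f.quotKerEquivOfSurjective hfs)
  obtain ⟨E2⟩ := h.equiv hn
  refine ⟨?_, E.isSimpleModule_iff.2 (h.simple hn), v, hv, ⟨E.trans E2⟩⟩
  obtain ⟨m, hm⟩ := Submodule.mkQ_surjective N n
  refine lt_of_le_of_ne ?_ ?_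
  · intro x hx
    rw [hN', Submodule.mem_comap, Submodule.mkQ_apply, (Submodule.Quotient.mk_eq_zero N).2 hx]
    exact S.zero_mem
  · intro heq
    have : m ∈ N' := by
      rw [hN', Submodule.mem_comap, hm]
      exact Submodule.mem_span_singleton_self n
    rw [← heq] at this
    apply hn
    rw [← hm, Submodule.mkQ_apply, (Submodule.Quotient.mk_eq_zero N).2 this]

theorem tensor_quot (N : Submodule (PathAlg k Q.rev) M)
    (hs : Subsingleton (TensorPhi (PathAlg k Q.rev) (Leavitt k Q) (revToLeavitt k Q).toRingHom M)) :
    Subsingleton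
      (TensorPhi (PathAlg k Q.rev) (Leavitt k Q) (revToLeavitt k Q).toRingHom (M ⧸ N)) := by
  rw [Submodule.Quotient.subsingleton_iff, eq_top_iff]
  intro z _
  induction z with
  | zero => exact Submodule.zero_mem _
  | add x y hx hy => exact Submodule.add_mem _ (hx trivial) (hy trivial)
  | tmul l y =>
    obtain ⟨m, rfl⟩ := Submodule.mkQ_surjective N y
    rw [← Submodule.Quotient.mk_eq_zero]
    have h : (Submodule.Quotient.mk (l ⊗ₜ[ℤ] m) :
      TensorPhi (PathAlg k Q.rev) (Leavitt k Q) (revToLeavitt k Q).toRingHom M) = 0 :=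
      Subsingleton.elim _ _
    have h2 := congrArg (tmap (PathAlg k Q.rev) (Leavitt k Q) (revToLeavitt k Q).toRingHom N.mkQ) h
    rw [map_zero] at h2
    exact h2

theorem good_top (hN : IsNoetherian (PathAlg k Q.rev) M)
    (hs : Subsingleton (TensorPhi (PathAlg k Q.rev) (Leavitt k Q) (revToLeavitt k Q).toRingHom M)) :
    Good k Q (⊤ : Submodule (PathAlg k Q.rev) M) := by
  obtain ⟨N, hN1, hN2⟩ := set_has_maximal_iff_noetherian.2 hN {N | Good k Q N} ⟨⊥, good_bot k Q⟩
  by_cases ht : N = ⊤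
  · rw [← ht]; exact hN1
  · exfalso
    have : Nontrivial (M ⧸ N) := Submodule.Quotient.nontrivial_iff.2 ht
    obtain ⟨v, a, hv, ha, ha0⟩ := exists_soc k Q (M ⧸ N) (tensor_quot k Q N hs)
    have hst := stp_of_soc k Q N hv ha ha0
    exact hN2 _ (Good.step k Q hN1 hst) hst.1

theorem tmul_mem_of_stp {A B : Submodule (PathAlg k Q.rev) M} (h : Stp k Q A B)
    (hA : ∀ (l : Leavitt k Q), ∀ m ∈ A, l ⊗ₜ[ℤ] m ∈
      trel (PathAlg k Q.rev) (Leavitt k Q) (revToLeavitt k Q).toRingHom M) :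
    ∀ (l : Leavitt k Q), ∀ m ∈ B, l ⊗ₜ[ℤ] m ∈
      trel (PathAlg k Q.rev) (Leavitt k Q) (revToLeavitt k Q).toRingHom M := by
  obtain ⟨-, -, v, hv, ⟨E⟩⟩ := h
  intro l m hm
  set T := trel (PathAlg k Q.rev) (Leavitt k Q) (revToLeavitt k Q).toRingHom M with hT
  have hbal : ∀ (l : Leavitt k Q) (p : PathAlg k Q.rev) (m : M),
      (l * revToLeavitt k Q p) ⊗ₜ[ℤ] m - l ⊗ₜ[ℤ] (p • m) ∈ T :=
    fun l p m => Submodule.subset_span ⟨l, p, m, rfl⟩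
  have hsoc := soc_coker k Q v (E (Submodule.Quotient.mk ⟨m, hm⟩))
  have h1 : pv k Q v • m - m ∈ A := by
    have := hsoc.1
    rw [← map_smul] at this
    have := E.injective this
    rw [← Submodule.Quotient.mk_smul, Submodule.Quotient.eq] at this
    exact this
  have h2 : ∀ e, ga k Q e • m ∈ A := by
    intro e
    have := hsoc.ga_smul e
    rw [← map_smul, ← map_zero E] at this
    have := E.injective this
    rw [← Submodule.Quotient.mk_smul, Submodule.Quotient.mk_eq_zero] at this
    exact this
  have hne : ∃ e : Q.A, Q.src e = v := by
    by_contra! H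
    exact hv H
  have hck := Leavitt.mk_rel k Q (LeavittRel.cuntz_krieger v hne)
  rw [map_sum] at hck
  simp only [map_mul] at hck
  change ∑ e ∈ Finset.univ.filter (fun e : Q.A => Q.src e = v),
    Leavitt.ed k Q e * Leavitt.gh k Q e = Leavitt.p k Q v at hck
  have h3 : (l * Leavitt.p k Q v) ⊗ₜ[ℤ] m ∈ T := by
    rw [← hck, Finset.mul_sum, TensorProduct.sum_tmul]
    refine Submodule.sum_mem _ fun e _ => ?_
    rw [← mul_assoc, ← rev_ga]
    have := Submodule.add_mem _ (hbal (l * Leavitt.ed k Q e) (ga k Q e) m)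
      (hA (l * Leavitt.ed k Q e) _ (h2 e))
    rwa [sub_add_cancel] at this
  have h4 := hbal l (pv k Q v) m
  rw [rev_pv] at h4
  have h5 := hA l _ h1
  rw [TensorProduct.tmul_sub] at h5
  have := Submodule.sub_mem _ (Submodule.sub_mem _ h3 h4) h5
  simpa using this

theorem subsingleton_of_good (h : Good k Q (⊤ : Submodule (PathAlg k Q.rev) M)) :
    Subsingleton (TensorPhi (PathAlg k Q.rev) (Leavitt k Q) (revToLeavitt k Q).toRingHom M) := by
  obtain ⟨n, c, h0, h1, h2⟩ := h
  have key : ∀ i : Fin (n + 1), ∀ (l : Leavitt k Q), ∀ m ∈ c i, l ⊗ₜ[ℤ] m ∈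
      trel (PathAlg k Q.rev) (Leavitt k Q) (revToLeavitt k Q).toRingHom M := by
    intro i
    induction i using Fin.induction with
    | zero =>
      intro l m hm
      rw [h0, Submodule.mem_bot] at hm
      rw [hm, TensorProduct.tmul_zero]
      exact Submodule.zero_mem _
    | succ i ih => exact tmul_mem_of_stp k Q (h2 i) ih
  rw [Submodule.Quotient.subsingleton_iff, eq_top_iff]
  intro z _
  induction z with
  | zero => exact Submodule.zero_mem _
  | add x y hx hy => exact Submodule.add_mem _ (hx trivial) (hy trivial)
  | tmul l m => exact key (Fin.last n) l m (by rw [h1]; trivial)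

end Fin
end LPA

open LPA in
/-- A finitely presented left `P_k(Ē)`-module `M` of finite length satisfies
`L_k(E) ⊗_{P_k(Ē)} M = 0` if and only if all of its composition factors are isomorphic to
modules in `{coker ν_i | i ∈ E⁰ not a sink}`. -/
theorem statement_13 (k : Type) [Field k] (Q : FinQuiver) (M : Type) [AddCommGroup M]
    [Module (PathAlg k Q.rev) M]
    (hfp : Module.FinitePresentation (PathAlg k Q.rev) M)
    (hfl : IsFiniteLength (PathAlg k Q.rev) M) :
    Subsingleton (TensorPhi (PathAlg k Q.rev) (Leavitt k Q) (revToLeavitt k Q).toRingHom M) ↔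
      ∃ (ℓ : ℕ) (c : Fin (ℓ + 1) → Submodule (PathAlg k Q.rev) M), IsCompSeries ℓ c ∧
        ∀ i : Fin ℓ, ∃ v : Q.V, ¬ IsSink Q v ∧
          Nonempty (SeriesFactor c i ≃ₗ[PathAlg k Q.rev] CokerNu k Q v) := by
  constructor
  · intro hs
    obtain ⟨l, c, h0, h1, h2⟩ := good_top k Q
      (isFiniteLength_iff_isNoetherian_isArtinian.1 hfl).1 hs
    exact ⟨l, c, ⟨h0, h1, fun i => ⟨(h2 i).1, (h2 i).2.1⟩⟩, fun i => (h2 i).2.2⟩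
  · rintro ⟨l, c, ⟨h0, h1, h2⟩, h3⟩
    exact subsingleton_of_good k Q ⟨l, c, h0, h1, fun i => ⟨(h2 i).1, (h2 i).2, h3 i⟩⟩
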